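/- For every integer k ≥ 2 there exists a sequence (f_v)_{v ∈ ℕ}, where f_v is a k-uniform hypergraph property on v vertices, together with constants c, C > 0 and v₀ ∈ ℕ, such that for all v ≥ v₀: c·v^{⌈k/2⌉} ≤ s(f_v) ≤ C·v^{⌈k/2⌉} and c·v^k ≤ bs(f_v) ≤ C·v^k; that is, s(f_v) = Θ(v^{⌈k/2⌉}) and bs(f_v) = Θ(v^k). -/

import Mathlib

open Finset

/-- The coordinate set: `k`-element subsets of `Fin v`. -/
abbrev KSet (v k : ℕ) : Type := {S : Finset (Fin v) // S.card = k}

/-- A `k`-uniform hypergraph on `Fin v`: a Boolean function on `k`-sets. -/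
abbrev HGraph (v k : ℕ) : Type := KSet v k → Bool

/-- Sensitivity of `f` at input `x`: the number of coordinates whose flip changes `f`. -/
def localSens {I : Type} [Fintype I] [DecidableEq I]
    (f : (I → Bool) → Bool) (x : I → Bool) : ℕ :=
  (Finset.univ.filter fun i => f (Function.update x i (!x i)) ≠ f x).card

/-- Sensitivity of `f`: maximum of `localSens f x` over all inputs `x`. -/
def sens {I : Type} [Fintype I] [DecidableEq I] (f : (I → Bool) → Bool) : ℕ :=
  Finset.univ.sup (localSens f)

/-- `sensOn b f` is `s^b(f)`: max sensitivity over inputs with `f x = b`. -/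
def sensOn {I : Type} [Fintype I] [DecidableEq I] (b : Bool) (f : (I → Bool) → Bool) : ℕ :=
  (Finset.univ.filter fun x => f x = b).sup (localSens f)

/-- Flip all the coordinates of `x` in the block `B`. -/
def flipBlock {I : Type} [DecidableEq I] (x : I → Bool) (B : Finset I) : I → Bool :=
  fun i => if i ∈ B then !x i else x i

/-- Block sensitivity of `f` at `x`: maximum number of pairwise disjoint sensitive blocks. -/
noncomputable def localBlockSens {I : Type} [Fintype I] [DecidableEq I]
    (f : (I → Bool) → Bool) (x : I → Bool) : ℕ :=
  sSup {n : ℕ | ∃ B : Fin n → Finset I,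
    (∀ j, f (flipBlock x (B j)) ≠ f x) ∧
    ∀ j j', j ≠ j' → Disjoint (B j) (B j')}

/-- Block sensitivity of `f`. -/
noncomputable def blockSens {I : Type} [Fintype I] [DecidableEq I]
    (f : (I → Bool) → Bool) : ℕ :=
  Finset.univ.sup (localBlockSens f)

/-- Image of a `k`-set under a permutation of the vertices. -/
def permKSet {v k : ℕ} (σ : Equiv.Perm (Fin v)) (S : KSet v k) : KSet v k :=
  ⟨S.1.map σ.toEmbedding, by rw [Finset.card_map]; exact S.2⟩

/-- A `k`-uniform hypergraph property: invariance under all vertex permutations,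
where `(σ • G) S = G (σ⁻¹ S)`. -/
def IsHypergraphProperty {v k : ℕ} (f : HGraph v k → Bool) : Prop :=
  ∀ (σ : Equiv.Perm (Fin v)) (G : HGraph v k),
    f (fun S => G (permKSet σ⁻¹ S)) = f G

/-!
Call a `(k + 1)`-set `A` of vertices an isolated clique of `G` if the edges of `G` meeting `A` in
at least `t` vertices are exactly the `k`-subsets of `A`. The property is the existence of an
isolated clique, with `t = ⌊k / 2⌋`.

Two distinct cliques `A`, `A'` sharing at least `t` vertices are incompatible: at least two
`k`-subsets of `A` meet `A'` in `t` vertices without lying inside it, and vice versa, so hypergraphs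
isolating `A` and `A'` respectively are at Hamming distance at least `4`. Hence the cliques created
by flipping single edges of a `G` without isolated cliques share fewer than `t` vertices if they are
distinct, and a clique determines the edge creating it, so there are at most `v ^ t` sensitive
edges. If `G` does have an isolated clique `A`, all sensitive edges meet `A` in at least `t`
vertices, and there are `O(v ^ (k - t))` of those; for the clique on `A` alone, all of them are
sensitive.

For the block sensitivity, filling a `(k + 1)`-set of the empty hypergraph is a sensitive block. By
pigeonhole, at least a `1 / v` fraction of all `(k + 1)`-sets in `ℤ / v` have the same sum of
elements, and two of these never share `k` elements, so their blocks are disjoint.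
-/

section Finset

variable {α : Type*} [DecidableEq α] {k t : ℕ} {A B : Finset α}

theorem one_lt_card_filter_powersetCard_not_subset (hk : 1 < k) (ht : t < k) (hA : #A = k + 1)
    (hAB : ¬ A ⊆ B) (hle : t ≤ #(A ∩ B)) :
    1 < #{S ∈ A.powersetCard k | t ≤ #(S ∩ B) ∧ ¬ S ⊆ B} := by
  have hadd := card_sdiff_add_card_inter A B
  obtain ⟨I, hIA, hI, hgood⟩ : ∃ I ⊆ A, 1 < #I ∧
      ∀ x ∈ I, t ≤ #(A.erase x ∩ B) ∧ ¬ A.erase x ⊆ B := by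
    by_cases hsdiff : 1 < #(A \ B)
    · refine ⟨A \ B, sdiff_subset, hsdiff, fun x hx => ⟨?_, fun hsub => ?_⟩⟩
      · rwa [erase_inter, erase_eq_of_notMem (by grind)]
      · obtain ⟨y, hy, hyx⟩ := exists_mem_ne hsdiff x
        grind
    · obtain ⟨w, hwA, hwB⟩ := not_subset.1 hAB
      have hpos : 0 < #(A \ B) := card_pos.2 ⟨w, mem_sdiff.2 ⟨hwA, hwB⟩⟩
      refine ⟨A ∩ B, inter_subset_left, by omega, fun x hx => ⟨?_, fun hsub => ?_⟩⟩
      · rw [erase_inter, card_erase_of_mem hx]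
        omega
      · exact hwB (hsub (mem_erase.2 ⟨by grind, hwA⟩))
  refine hI.trans_le (card_le_card_of_injOn A.erase (fun x hx => ?_)
    ((erase_injOn A).mono (coe_subset.2 hIA)))
  have hcard : #(A.erase x) = k := by rw [card_erase_of_mem (hIA hx), hA, Nat.add_sub_cancel]
  exact mem_filter.2 ⟨mem_powersetCard.2 ⟨erase_subset x A, hcard⟩, hgood x hx⟩

theorem card_filter_powersetCard_inter_le (k t : ℕ) (A B : Finset α) :
    #{S ∈ B.powersetCard k | t ≤ #(S ∩ A)} ≤ (#A).choose t * (#B).choose (k - t) := by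
  rw [← card_powersetCard, ← card_powersetCard, ← card_product]
  refine card_le_card_of_surjOn (fun P => P.1 ∪ P.2) fun S hS => ?_
  obtain ⟨hSk, hSA⟩ := mem_filter.1 hS
  obtain ⟨hSB, hSk⟩ := mem_powersetCard.1 hSk
  obtain ⟨T, hT, hTt⟩ := exists_subset_card_eq hSA
  have hTS : T ⊆ S := hT.trans inter_subset_left
  have hdiff : #(S \ T) = k - t := by rw [card_sdiff_of_subset hTS, hSk, hTt]
  exact ⟨(T, S \ T), mem_product.2 ⟨mem_powersetCard.2 ⟨hT.trans inter_subset_right, hTt⟩,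
    mem_powersetCard.2 ⟨sdiff_subset.trans hSB, hdiff⟩⟩, union_sdiff_of_subset hTS⟩

theorem choose_le_card_filter_powersetCard_inter (htk : t ≤ k) (htA : t ≤ #A) (hAB : A ⊆ B) :
    (#B - #A).choose (k - t) ≤ #{S ∈ B.powersetCard k | t ≤ #(S ∩ A)} := by
  obtain ⟨T, hTA, hT⟩ := exists_subset_card_eq htA
  rw [← card_sdiff_of_subset hAB, ← card_powersetCard]
  have hdisj {U : Finset α} (hU : U ∈ (B \ A).powersetCard (k - t)) : Disjoint T U :=
    disjoint_sdiff.mono hTA (mem_powersetCard.1 hU).1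
  refine card_le_card_of_injOn (T ∪ ·) (fun U hU => ?_) fun U hU U' hU' h => ?_
  · obtain ⟨hUsub, hUcard⟩ := mem_powersetCard.1 hU
    have hcard : #(T ∪ U) = k := by
      rw [card_union_of_disjoint (hdisj hU), hT, hUcard, Nat.add_sub_cancel' htk]
    exact mem_filter.2 ⟨mem_powersetCard.2 ⟨union_subset (hTA.trans hAB)
      (hUsub.trans sdiff_subset), hcard⟩,
      hT.ge.trans (card_le_card (subset_inter subset_union_left hTA))⟩
  · rw [← union_sdiff_cancel_left (hdisj hU), ← union_sdiff_cancel_left (hdisj hU')]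
    exact congrArg (· \ T) h

theorem eq_of_sum_eq_of_card_le_card_inter [AddCommGroup α] (hA : #A = k + 1) (hB : #B = k + 1)
    (hle : k ≤ #(A ∩ B)) (hsum : ∑ x ∈ A, x = ∑ x ∈ B, x) : A = B := by
  obtain ⟨S, hS, hSk⟩ := exists_subset_card_eq hle
  obtain ⟨a, ha, rfl⟩ := exists_eq_insert_iff.2 ⟨hS.trans inter_subset_left, by omega⟩
  obtain ⟨b, hb, rfl⟩ := exists_eq_insert_iff.2 ⟨hS.trans inter_subset_right, by omega⟩
  rw [sum_insert ha, sum_insert hb] at hsum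
  rw [add_right_cancel hsum]

end Finset

theorem pow_le_two_pow_mul_factorial_mul_choose {m n r : ℕ} (h : m ≤ 2 * (n + 1 - r)) :
    m ^ r ≤ 2 ^ r * r.factorial * n.choose r :=
  calc m ^ r ≤ (2 * (n + 1 - r)) ^ r := Nat.pow_le_pow_left h r
    _ = 2 ^ r * (n + 1 - r) ^ r := mul_pow _ _ _
    _ ≤ 2 ^ r * n.descFactorial r := Nat.mul_le_mul_left _ (Nat.pow_sub_le_descFactorial n r)
    _ = 2 ^ r * r.factorial * n.choose r := by
      rw [Nat.descFactorial_eq_factorial_mul_choose, mul_assoc]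

theorem hammingDist_update_le_one {ι : Type*} {β : ι → Type*} [Fintype ι] [DecidableEq ι]
    [∀ i, DecidableEq (β i)] (x : ∀ i, β i) (i : ι) (b : β i) :
    hammingDist x (Function.update x i b) ≤ 1 := by
  refine (card_le_card fun j hj => mem_singleton.2 ?_).trans_eq (card_singleton i)
  by_contra hne
  simp [Function.update_of_ne hne] at hj

section BlockSensitivity

variable {I : Type} [Fintype I] [DecidableEq I] {f : (I → Bool) → Bool} {x : I → Bool}

theorem le_card_of_sensitive_blocks {n : ℕ} {B : Fin n → Finset I}
    (hB : ∀ j, f (flipBlock x (B j)) ≠ f x) (hd : ∀ j j', j ≠ j' → Disjoint (B j) (B j')) :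
    n ≤ Fintype.card I := by
  have hne (j : Fin n) : (B j).Nonempty := by
    rw [nonempty_iff_ne_empty]
    intro hj
    exact hB j (congrArg f (funext fun i => by simp [flipBlock, hj]))
  choose g hg using hne
  have hinj : Function.Injective g := fun j j' h => by
    by_contra hjj
    exact disjoint_left.1 (hd j j' hjj) (hg j) (h ▸ hg j')
  simpa using Fintype.card_le_of_injective g hinj

theorem blockSens_le_card (f : (I → Bool) → Bool) : blockSens f ≤ Fintype.card I :=
  Finset.sup_le fun _ _ => csSup_le' fun _ ⟨_, hB, hd⟩ => le_card_of_sensitive_blocks hB hd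

theorem card_le_blockSens {ι : Type*} (s : Finset ι) (B : ι → Finset I)
    (hB : ∀ j ∈ s, f (flipBlock x (B j)) ≠ f x) (hd : (s : Set ι).PairwiseDisjoint B) :
    #s ≤ blockSens f := by
  refine le_trans (le_csSup ?_ ?_) (le_sup (f := localBlockSens f) (mem_univ x))
  · exact ⟨Fintype.card I, fun _ ⟨_, hB, hd⟩ => le_card_of_sensitive_blocks hB hd⟩
  · refine ⟨fun j => B (s.equivFin.symm j), fun j => hB _ (coe_mem _), fun j j' hjj => ?_⟩
    exact hd (coe_mem _) (coe_mem _)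
      (Subtype.coe_injective.ne (s.equivFin.symm.injective.ne hjj))

end BlockSensitivity

variable {v k t t' : ℕ} {G G' : HGraph v k} {A A' : Finset (Fin v)} {e e' : KSet v k}

theorem card_filter_kset (p : Finset (Fin v) → Prop) [DecidablePred p] :
    #{S : KSet v k | p S.1} = #{S ∈ (univ : Finset (Fin v)).powersetCard k | p S} :=
  card_bij (fun S _ => S.1) (by simp +contextual) (fun _ _ _ _ => Subtype.ext)
    fun S hS => ⟨⟨S, by grind⟩, by grind, rfl⟩

theorem permKSet_inv_permKSet (σ : Equiv.Perm (Fin v)) (S : KSet v k) :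
    permKSet σ⁻¹ (permKSet σ S) = S := by
  ext x
  simp [permKSet, Equiv.Perm.inv_def]

/-- `A` is an isolated clique of the `k`-uniform hypergraph `G` with threshold `t`: it has `k + 1`
vertices, and among the `k`-sets meeting it in at least `t` vertices, the edges of `G` are exactly
those contained in `A`. -/
structure IsIsolatedClique (t : ℕ) (G : HGraph v k) (A : Finset (Fin v)) : Prop where
  card_eq : #A = k + 1
  eq_true_iff_subset : ∀ S : KSet v k, t ≤ #(S.1 ∩ A) → (G S = true ↔ S.1 ⊆ A)

open Classical in
/-- The hypergraph property of having an isolated clique with threshold `t`. -/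
noncomputable def hasIsolatedClique (t : ℕ) (G : HGraph v k) : Bool :=
  decide (∃ A, IsIsolatedClique t G A)

theorem hasIsolatedClique_eq_true :
    hasIsolatedClique t G = true ↔ ∃ A, IsIsolatedClique t G A := by
  simp [hasIsolatedClique]

theorem hasIsolatedClique_eq_false :
    hasIsolatedClique t G = false ↔ ∀ A, ¬ IsIsolatedClique t G A := by
  simp [hasIsolatedClique]

/-- The complete `k`-uniform hypergraph on the vertex set `A`, with the vertices outside `A`
isolated. -/
def cliqueOn (k : ℕ) (A : Finset (Fin v)) : HGraph v k := fun S => decide (S.1 ⊆ A)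

theorem isIsolatedClique_cliqueOn (t : ℕ) (hA : #A = k + 1) :
    IsIsolatedClique t (cliqueOn k A) A :=
  ⟨hA, fun S _ => by simp [cliqueOn]⟩

namespace IsIsolatedClique

theorem perm (h : IsIsolatedClique t G A) (σ : Equiv.Perm (Fin v)) :
    IsIsolatedClique t (fun S => G (permKSet σ⁻¹ S)) (A.map σ.toEmbedding) := by
  refine ⟨by simpa using h.card_eq, fun S hS => ?_⟩
  have hmap : S.1 = (permKSet σ⁻¹ S).1.map σ.toEmbedding :=
    congrArg Subtype.val (permKSet_inv_permKSet σ⁻¹ S).symm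
  rw [hmap, ← map_inter, card_map] at hS
  rw [h.eq_true_iff_subset _ hS, ← map_subset_map (f := σ.toEmbedding), ← hmap]

theorem apply_eq (h : IsIsolatedClique t G A) (h' : IsIsolatedClique t G' A)
    (he : t ≤ #(e.1 ∩ A)) : G e = G' e := by
  rw [Bool.eq_iff_iff, h.eq_true_iff_subset e he, h'.eq_true_iff_subset e he]

theorem update (h : IsIsolatedClique t G A) (he : #(e.1 ∩ A) < t) (b : Bool) :
    IsIsolatedClique t (Function.update G e b) A := by
  refine ⟨h.card_eq, fun S hS => ?_⟩
  have hSe : S ≠ e := by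
    rintro rfl
    omega
  rw [Function.update_of_ne hSe, h.eq_true_iff_subset S hS]

theorem one_lt_card_edge_nonedge (hk : 1 < k) (ht : t ≤ k) (ht' : t' < k)
    (h : IsIsolatedClique t G A) (h' : IsIsolatedClique t' G' A') (hne : A ≠ A')
    (hle : t' ≤ #(A ∩ A')) : 1 < #{S | G S = true ∧ G' S = false} := by
  have hsub : ¬ A ⊆ A' := fun hsub =>
    hne (eq_of_subset_of_card_le hsub (h'.card_eq.trans h.card_eq.symm).le)
  obtain ⟨S, hS, T, hT, hST⟩ :=
    one_lt_card.1 (one_lt_card_filter_powersetCard_not_subset hk ht' h.card_eq hsub hle)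
  have edge_nonedge {U : Finset (Fin v)}
      (hU : U ∈ {U ∈ A.powersetCard k | t' ≤ #(U ∩ A') ∧ ¬ U ⊆ A'}) :
      ∃ hUk : #U = k, G ⟨U, hUk⟩ = true ∧ G' ⟨U, hUk⟩ = false := by
    obtain ⟨hUA, hUt, hUA'⟩ := mem_filter.1 hU
    obtain ⟨hUA, hUk⟩ := mem_powersetCard.1 hUA
    refine ⟨hUk, (h.eq_true_iff_subset _ ?_).2 hUA, ?_⟩
    · rwa [inter_eq_left.2 hUA, hUk]
    · rwa [← Bool.not_eq_true, h'.eq_true_iff_subset _ hUt]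
  obtain ⟨hSk, hSG⟩ := edge_nonedge hS
  obtain ⟨hTk, hTG⟩ := edge_nonedge hT
  exact one_lt_card.2 ⟨⟨S, hSk⟩, by simpa using hSG, ⟨T, hTk⟩, by simpa using hTG,
    fun hST' => hST (congrArg Subtype.val hST')⟩

theorem four_le_hammingDist (hk : 1 < k) (ht : t < k) (h : IsIsolatedClique t G A)
    (h' : IsIsolatedClique t G' A') (hne : A ≠ A') (hle : t ≤ #(A ∩ A')) :
    4 ≤ hammingDist G G' := by
  have hlt := h.one_lt_card_edge_nonedge hk ht.le ht h' hne hle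
  have hlt' := h'.one_lt_card_edge_nonedge hk ht.le ht h hne.symm (by rwa [inter_comm])
  have hdisj : Disjoint ({S | G S = true ∧ G' S = false} : Finset (KSet v k))
      ({S | G' S = true ∧ G S = false} : Finset (KSet v k)) := by
    rw [disjoint_filter]
    grind
  calc 4 ≤ #{S | G S = true ∧ G' S = false} + #{S | G' S = true ∧ G S = false} := by omega
    _ = #(({S | G S = true ∧ G' S = false} : Finset (KSet v k)) ∪
          ({S | G' S = true ∧ G S = false} : Finset (KSet v k))) :=
      (card_union_of_disjoint hdisj).symm
    _ ≤ hammingDist G G' := card_le_card fun S hS => by grind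

theorem eq_of_update_update (hk : 1 < k) (ht : t < k) {b b' : Bool}
    (h : IsIsolatedClique t (Function.update G e b) A)
    (h' : IsIsolatedClique t (Function.update G e' b') A') (hle : t ≤ #(A ∩ A')) : A = A' := by
  by_contra hne
  have hfour := h.four_le_hammingDist hk ht h' hne hle
  have htriangle := hammingDist_triangle_left (Function.update G e b) (Function.update G e' b') G
  have he := hammingDist_update_le_one G e b
  have he' := hammingDist_update_le_one G e' b'
  omega

end IsIsolatedClique

theorem not_isIsolatedClique_update_cliqueOn (hk : 1 < k) (ht : t < k) (hA : #A = k + 1)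
    (he : t ≤ #(e.1 ∩ A)) (A' : Finset (Fin v)) :
    ¬ IsIsolatedClique t (Function.update (cliqueOn k A) e (!cliqueOn k A e)) A' := by
  intro h'
  obtain rfl | hne := eq_or_ne A' A
  · simpa using h'.apply_eq (isIsolatedClique_cliqueOn t hA) he
  · -- Threshold `0` for `cliqueOn k A` makes any `A' ≠ A` conflict with it, even a disjoint one.
    have hlt := h'.one_lt_card_edge_nonedge hk ht.le (Nat.zero_lt_of_lt hk)
      (isIsolatedClique_cliqueOn 0 hA) hne (Nat.zero_le _)
    have hle : #{S | Function.update (cliqueOn k A) e (!cliqueOn k A e) S = true ∧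
        cliqueOn k A S = false} ≤ 1 :=
      (card_le_card fun S hS => by grind).trans
        (hammingDist_update_le_one (cliqueOn k A) e (!cliqueOn k A e))
    omega

theorem isHypergraphProperty_hasIsolatedClique (t : ℕ) :
    IsHypergraphProperty (hasIsolatedClique t : HGraph v k → Bool) := by
  intro σ G
  rw [Bool.eq_iff_iff, hasIsolatedClique_eq_true, hasIsolatedClique_eq_true]
  refine ⟨fun ⟨A, hA⟩ => ⟨A.map σ⁻¹.toEmbedding, ?_⟩, fun ⟨A, hA⟩ => ⟨_, hA.perm σ⟩⟩
  simpa only [inv_inv, permKSet_inv_permKSet] using hA.perm σ⁻¹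

theorem localSens_hasIsolatedClique_le_of_eq_false (hk : 1 < k) (ht : t < k)
    (hG : hasIsolatedClique t G = false) : localSens (hasIsolatedClique t) G ≤ v ^ t := by
  rw [localSens, hG]
  set F := univ.filter fun e => hasIsolatedClique t (Function.update G e (!G e)) ≠ false
  have exists_clique : ∀ e ∈ F, ∃ A, IsIsolatedClique t (Function.update G e (!G e)) A :=
    fun e he => hasIsolatedClique_eq_true.1 (by simpa [F] using he)
  choose! A hA using exists_clique
  have meets : ∀ e ∈ F, t ≤ #(e.1 ∩ A e) := by
    intro e he
    by_contra! hlt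
    have := (hA e he).update hlt (G e)
    rw [Function.update_idem, Function.update_eq_self] at this
    exact hasIsolatedClique_eq_false.1 hG _ this
  have exists_core : ∀ e ∈ F, ∃ T ⊆ A e, #T = t := fun e he =>
    exists_subset_card_eq (by have := (hA e he).card_eq; omega)
  choose! T hTA hT using exists_core
  have clique_eq : ∀ e ∈ F, ∀ e' ∈ F, T e = T e' → A e = A e' := fun e he e' he' hee =>
    (hA e he).eq_of_update_update hk ht (hA e' he')
      ((hT e he).ge.trans (card_le_card (subset_inter (hTA e he) (hee ▸ hTA e' he'))))
  have hinj : Set.InjOn T F := by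
    intro e he e' he' hee
    by_contra hne
    have happly := (hA e he).apply_eq (clique_eq e he e' he' hee ▸ hA e' he') (meets e he)
    simp [Function.update_of_ne hne] at happly
  calc #F ≤ #((univ : Finset (Fin v)).powersetCard t) :=
        card_le_card_of_injOn T (fun e he => mem_powersetCard_univ.2 (hT e he)) hinj
    _ = v.choose t := by rw [card_powersetCard, card_univ, Fintype.card_fin]
    _ ≤ v ^ t := Nat.choose_le_pow v t

theorem localSens_hasIsolatedClique_le_of_eq_true (hG : hasIsolatedClique t G = true) :
    localSens (hasIsolatedClique t) G ≤ 2 ^ (k + 1) * v ^ (k - t) := by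
  obtain ⟨A, hA⟩ := hasIsolatedClique_eq_true.1 hG
  have meets (e : KSet v k)
      (he : hasIsolatedClique t (Function.update G e (!G e)) ≠ hasIsolatedClique t G) :
      t ≤ #(e.1 ∩ A) := by
    by_contra! hlt
    exact he (hG ▸ hasIsolatedClique_eq_true.2 ⟨A, hA.update hlt _⟩)
  calc localSens (hasIsolatedClique t) G ≤ #{S : KSet v k | t ≤ #(S.1 ∩ A)} :=
        card_le_card (monotone_filter_right _ fun e _ => meets e)
    _ = #{S ∈ (univ : Finset (Fin v)).powersetCard k | t ≤ #(S ∩ A)} :=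
        card_filter_kset fun S => t ≤ #(S ∩ A)
    _ ≤ (k + 1).choose t * v.choose (k - t) := by
        simpa [hA.card_eq] using card_filter_powersetCard_inter_le k t A univ
    _ ≤ 2 ^ (k + 1) * v ^ (k - t) :=
        Nat.mul_le_mul (Nat.choose_le_two_pow _ _) (Nat.choose_le_pow _ _)

theorem sens_hasIsolatedClique_le (hv : 0 < v) (hk : 1 < k) (ht : t < k) :
    sens (hasIsolatedClique t : HGraph v k → Bool) ≤ 2 ^ (k + 1) * v ^ max t (k - t) := by
  refine Finset.sup_le fun G _ => ?_
  cases hG : hasIsolatedClique t G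
  · calc localSens (hasIsolatedClique t) G ≤ v ^ t :=
          localSens_hasIsolatedClique_le_of_eq_false hk ht hG
      _ ≤ v ^ max t (k - t) := Nat.pow_le_pow_right hv (le_max_left _ _)
      _ ≤ 2 ^ (k + 1) * v ^ max t (k - t) := Nat.le_mul_of_pos_left _ (by positivity)
  · calc localSens (hasIsolatedClique t) G ≤ 2 ^ (k + 1) * v ^ (k - t) :=
          localSens_hasIsolatedClique_le_of_eq_true hG
      _ ≤ 2 ^ (k + 1) * v ^ max t (k - t) :=
          Nat.mul_le_mul_left _ (Nat.pow_le_pow_right hv (le_max_right _ _))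

theorem choose_le_sens_hasIsolatedClique (hk : 1 < k) (ht : t < k) (hv : k + 1 ≤ v) :
    (v - (k + 1)).choose (k - t) ≤ sens (hasIsolatedClique t : HGraph v k → Bool) := by
  obtain ⟨A, hAuniv, hA⟩ := exists_subset_card_eq
    (show k + 1 ≤ #(univ : Finset (Fin v)) by simpa using hv)
  have hclique : hasIsolatedClique t (cliqueOn k A) = true :=
    hasIsolatedClique_eq_true.2 ⟨A, isIsolatedClique_cliqueOn t hA⟩
  have sensitive (e : KSet v k) (he : t ≤ #(e.1 ∩ A)) :
      hasIsolatedClique t (Function.update (cliqueOn k A) e (!cliqueOn k A e)) ≠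
        hasIsolatedClique t (cliqueOn k A) := by
    rw [hclique, hasIsolatedClique_eq_false.2 (not_isIsolatedClique_update_cliqueOn hk ht hA he)]
    exact Bool.false_ne_true
  calc (v - (k + 1)).choose (k - t)
      ≤ #{S ∈ (univ : Finset (Fin v)).powersetCard k | t ≤ #(S ∩ A)} := by
        simpa [hA] using
          choose_le_card_filter_powersetCard_inter ht.le (show t ≤ #A by omega) hAuniv
    _ = #{S : KSet v k | t ≤ #(S.1 ∩ A)} := (card_filter_kset fun S => t ≤ #(S ∩ A)).symm
    _ ≤ localSens (hasIsolatedClique t) (cliqueOn k A) :=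
        card_le_card (monotone_filter_right _ fun e _ => sensitive e)
    _ ≤ sens (hasIsolatedClique t : HGraph v k → Bool) := le_sup (mem_univ _)

theorem pow_sub_le_mul_sens_hasIsolatedClique (hk : 1 < k) (ht : t < k) (hv : 4 * (k + 1) ≤ v) :
    v ^ (k - t) ≤ 2 ^ (k - t) * (k - t).factorial *
      sens (hasIsolatedClique t : HGraph v k → Bool) :=
  (pow_le_two_pow_mul_factorial_mul_choose (by omega)).trans
    (Nat.mul_le_mul_left _ (choose_le_sens_hasIsolatedClique hk ht (by omega)))

theorem hasIsolatedClique_const_false (ht : t ≤ k) :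
    hasIsolatedClique t (fun _ : KSet v k => false) = false := by
  rw [hasIsolatedClique_eq_false]
  intro A hA
  obtain ⟨S, hSA, hS⟩ := exists_subset_card_eq (show k ≤ #A by have := hA.card_eq; omega)
  have hmeet : t ≤ #(S ∩ A) := by rwa [inter_eq_left.2 hSA, hS]
  exact Bool.false_ne_true ((hA.eq_true_iff_subset ⟨S, hS⟩ hmeet).2 hSA)

theorem card_le_blockSens_hasIsolatedClique (ht : t ≤ k) (𝒜 : Finset (Finset (Fin v)))
    (hcard : ∀ A ∈ 𝒜, #A = k + 1)
    (hinter : (𝒜 : Set (Finset (Fin v))).Pairwise fun A B => #(A ∩ B) < k) :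
    #𝒜 ≤ blockSens (hasIsolatedClique t : HGraph v k → Bool) := by
  refine card_le_blockSens (x := fun _ => false) 𝒜 (fun A => {S : KSet v k | S.1 ⊆ A}) ?_ ?_
  · intro A hA
    have hfill : flipBlock (fun _ => false) {S : KSet v k | S.1 ⊆ A} = cliqueOn k A := by
      ext S
      simp [flipBlock, cliqueOn]
    rw [hfill, hasIsolatedClique_const_false ht,
      hasIsolatedClique_eq_true.2 ⟨A, isIsolatedClique_cliqueOn t (hcard A hA)⟩]
    exact Bool.false_ne_true.symm
  · intro A hA B hB hAB
    refine disjoint_filter.2 fun S _ hSA hSB => (hinter hA hB hAB).not_ge ?_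
    exact S.2.ge.trans (card_le_card (subset_inter hSA hSB))

theorem choose_le_mul_blockSens_hasIsolatedClique [NeZero v] (ht : t ≤ k) :
    v.choose (k + 1) ≤ v * blockSens (hasIsolatedClique t : HGraph v k → Bool) := by
  have hfiber : ∀ r ∈ (univ : Finset (Fin v)),
      #{A ∈ (univ : Finset (Fin v)).powersetCard (k + 1) | ∑ x ∈ A, x = r} ≤
        blockSens (hasIsolatedClique t : HGraph v k → Bool) := by
    intro r _
    refine card_le_blockSens_hasIsolatedClique ht _ (by simp +contextual) ?_
    intro A hA B hB hAB
    simp only [coe_filter, mem_powersetCard_univ, Set.mem_ofPred_eq] at hA hB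
    by_contra! hle
    exact hAB (eq_of_sum_eq_of_card_le_card_inter hA.1 hB.1 hle (hA.2.trans hB.2.symm))
  simpa [mul_comm] using card_le_mul_card_image_of_maps_to (fun A _ => mem_univ _) _ hfiber

theorem pow_le_mul_blockSens_hasIsolatedClique (ht : t ≤ k) (hv : 4 * (k + 1) ≤ v) :
    v ^ k ≤ 2 ^ (k + 1) * (k + 1).factorial *
      blockSens (hasIsolatedClique t : HGraph v k → Bool) := by
  have : NeZero v := ⟨by omega⟩
  refine Nat.le_of_mul_le_mul_left ?_ (show 0 < v by omega)
  calc v * v ^ k = v ^ (k + 1) := (pow_succ' v k).symm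
    _ ≤ 2 ^ (k + 1) * (k + 1).factorial * v.choose (k + 1) :=
        pow_le_two_pow_mul_factorial_mul_choose (by omega)
    _ ≤ 2 ^ (k + 1) * (k + 1).factorial *
          (v * blockSens (hasIsolatedClique t : HGraph v k → Bool)) :=
        Nat.mul_le_mul_left _ (choose_le_mul_blockSens_hasIsolatedClique ht)
    _ = v * (2 ^ (k + 1) * (k + 1).factorial *
          blockSens (hasIsolatedClique t : HGraph v k → Bool)) := mul_left_comm _ _ _

theorem blockSens_le_pow (f : HGraph v k → Bool) : blockSens f ≤ v ^ k :=
  calc blockSens f ≤ Fintype.card (KSet v k) := blockSens_le_card f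
    _ = v.choose k := by rw [Fintype.card_finset_len, Fintype.card_fin]
    _ ≤ v ^ k := Nat.choose_le_pow v k

theorem stmt12 (k : ℕ) (hk : 2 ≤ k) :
    ∃ f : (v : ℕ) → (HGraph v k → Bool),
      (∀ v, IsHypergraphProperty (f v)) ∧
      ∃ c C : ℝ, 0 < c ∧ 0 < C ∧ ∃ v₀ : ℕ, ∀ v : ℕ, v₀ ≤ v →
        c * (v : ℝ) ^ ((k + 1) / 2 : ℕ) ≤ (sens (f v) : ℝ) ∧
        (sens (f v) : ℝ) ≤ C * (v : ℝ) ^ ((k + 1) / 2 : ℕ) ∧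
        c * (v : ℝ) ^ k ≤ (blockSens (f v) : ℝ) ∧
        (blockSens (f v) : ℝ) ≤ C * (v : ℝ) ^ k := by
  have hceil : k - k / 2 = (k + 1) / 2 := by omega
  have hmax : max (k / 2) (k - k / 2) = (k + 1) / 2 := by omega
  set M : ℕ := 2 ^ (k + 1) * (k + 1).factorial
  have hM : (0 : ℝ) < M := by positivity
  refine ⟨fun v => hasIsolatedClique (k / 2), fun v => isHypergraphProperty_hasIsolatedClique _,
    (M : ℝ)⁻¹, 2 ^ (k + 1), by positivity, by positivity, 4 * (k + 1), fun v hv => ?_⟩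
  rw [inv_mul_le_iff₀ hM, inv_mul_le_iff₀ hM]
  norm_cast
  have hsens_ge := pow_sub_le_mul_sens_hasIsolatedClique hk (show k / 2 < k by omega) hv
  have hsens_le :=
    sens_hasIsolatedClique_le (show 0 < v by omega) hk (show k / 2 < k by omega)
  rw [hceil] at hsens_ge
  rw [hmax] at hsens_le
  refine ⟨hsens_ge.trans ?_, hsens_le,
    pow_le_mul_blockSens_hasIsolatedClique (Nat.div_le_self k 2) hv,
    (blockSens_le_pow _).trans (Nat.le_mul_of_pos_left _ (by positivity))⟩
  exact Nat.mul_le_mul_right _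
    (Nat.mul_le_mul (Nat.pow_le_pow_right two_pos (by omega)) (Nat.factorial_le (by omega)))
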